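/- Let $0 < p \le 1$ and $n \ge 1$. There exists a constant $C$, depending only on $n$ and $p$, such that for every finite collection of axis-parallel cubes $\{Q_k\}_{k=1}^K$ in $\mathbf{R}^n$ and every collection of nonnegative integrable functions $g_k$ with $\operatorname{supp} g_k \subseteq Q_k$, one has $\big\| \sum_{k=1}^K g_k \big\|_{L^p(\mathbf{R}^n)} \le C \, \big\| \sum_{k=1}^K \big( |Q_k|^{-1} \int_{Q_k} g_k(x)\,dx \big) \chi_{Q_k^*} \big\|_{L^p(\mathbf{R}^n)}$. -/

import Mathlib

open MeasureTheory Set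

noncomputable section

/-- The closed axis-parallel cube in `ℝⁿ` with center `c` and side length `l`. -/
def Cube {n : ℕ} (c : EuclideanSpace ℝ (Fin n)) (l : ℝ) : Set (EuclideanSpace ℝ (Fin n)) :=
  {x | ∀ i, x i ∈ Set.Icc (c i - l / 2) (c i + l / 2)}

open scoped ENNReal in
lemma const_ne_zero (A : ℝ≥0∞) (hA0 : A ≠ 0) (p s : ℝ) (hp : 0 < p) (hs : 0 < s) :
    2 * A * (2 ^ s⁻¹) ^ p ≠ 0 := by
  refine mul_ne_zero (mul_ne_zero (by simp) hA0) ?_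
  rw [← ENNReal.rpow_mul]
  exact (ENNReal.rpow_pos (by simp) (by simp)).ne'

open scoped ENNReal in
lemma const_ne_top (A : ℝ≥0∞) (hA : A ≠ ∞) (p s : ℝ) (hp : 0 < p) (hs : 0 < s) :
    2 * A * (2 ^ s⁻¹) ^ p ≠ ∞ := by
  refine ENNReal.mul_ne_top (ENNReal.mul_ne_top (by simp) hA) ?_
  rw [← ENNReal.rpow_mul]
  exact ENNReal.rpow_ne_top_of_nonneg (by positivity) (by simp)

open scoped ENNReal in
lemma layer_aux {α : Type*} [MeasurableSpace α] (μ : Measure α) (H F : α → ℝ≥0∞)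
    (hH : Measurable H) (hF : Measurable F) (hH' : ∀ x, H x ≠ ∞) (hF' : ∀ x, F x ≠ ∞)
    (A : ℝ≥0∞) (hA : A ≠ ∞) (p : ℝ) (hp : 0 < p)
    (h : ∀ t : ℝ, 0 < t → μ {x | ENNReal.ofReal t < H x} ≤ A * μ {x | ENNReal.ofReal t ≤ F x}) :
    ∫⁻ x, H x ^ p ∂μ ≤ A * ∫⁻ x, F x ^ p ∂μ := by
  have key : ∀ f : α → ℝ≥0∞, (∀ x, f x ≠ ∞) →
      ∫⁻ x, f x ^ p ∂μ = ∫⁻ x, ENNReal.ofReal ((f x).toReal ^ p) ∂μ := by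
    intro f hf
    refine lintegral_congr fun x => ?_
    rw [ENNReal.toReal_rpow, ENNReal.ofReal_toReal]
    exact ENNReal.rpow_ne_top_of_nonneg hp.le (hf x)
  rw [key H hH', key F hF',
    lintegral_rpow_eq_lintegral_meas_lt_mul μ (Filter.Eventually.of_forall fun x => ENNReal.toReal_nonneg)
      hH.ennreal_toReal.aemeasurable hp,
    lintegral_rpow_eq_lintegral_meas_le_mul μ (Filter.Eventually.of_forall fun x => ENNReal.toReal_nonneg)
      hF.ennreal_toReal.aemeasurable hp]
  rw [mul_left_comm, ← lintegral_const_mul' _ _ hA]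
  refine mul_le_mul_right ?_ _
  refine setLIntegral_mono' (measurableSet_Ioi (a := (0 : ℝ))) fun t ht => ?_
  rw [← mul_assoc]
  gcongr ?_ * _
  have ht' : 0 < t := ht
  have h1 : {x | t < (H x).toReal} = {x | ENNReal.ofReal t < H x} :=
    Set.ext fun x => (ENNReal.ofReal_lt_iff_lt_toReal ht'.le (hH' x)).symm
  have h2 : {x | t ≤ (F x).toReal} = {x | ENNReal.ofReal t ≤ F x} :=
    Set.ext fun x => (ENNReal.ofReal_le_iff_le_toReal (hF' x)).symm
  rw [h1, h2]
  exact h t ht'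

open scoped ENNReal in
lemma weak_aux {α : Type*} [MeasurableSpace α] (μ : Measure α) {ι : Type*} [Fintype ι]
    (Q : ι → Set α) (hQm : ∀ k, MeasurableSet (Q k))
    (hQ1 : ∀ k, μ (Q k) ≠ ∞) (A : ℝ≥0∞)
    (hcov : ∀ T : Set ι, ∃ u : Finset ι, (u : Set ι) ⊆ T ∧ (u : Set ι).PairwiseDisjoint Q ∧
      μ (⋃ k ∈ T, Q k) ≤ A * ∑ k ∈ u, μ (Q k))
    (F : α → ℝ≥0∞) (hF : Measurable F) (s : ℝ) (hs : 0 < s) (b : ι → ℝ≥0∞)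
    (hb : ∀ k, ∫⁻ x in Q k, F x ^ (-s) ∂μ = b k * μ (Q k))
    (t : ℝ≥0∞) (ht0 : t ≠ 0) (ht1 : t ≠ ∞) :
    μ {x | t < ⨆ k, (Q k).indicator (fun _ => b k ^ (-s⁻¹)) x} ≤
      (2 * A) * μ {x | t ≤ 2 ^ (s⁻¹) * F x} := by
  set S : Set α := {x | t ≤ 2 ^ (s⁻¹) * F x} with hS
  have hSm : MeasurableSet S := measurableSet_le measurable_const (hF.const_mul _)
  set T : Set ι := {k | t < b k ^ (-s⁻¹)} with hT
  obtain ⟨u, huT, hud, hu⟩ := hcov T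
  have hsub : {x | t < ⨆ k, (Q k).indicator (fun _ => b k ^ (-s⁻¹)) x} ⊆ ⋃ k ∈ T, Q k := by
    intro x hx
    obtain ⟨k, hk⟩ := lt_iSup_iff.1 (show t < _ from hx)
    by_cases hxk : x ∈ Q k
    · rw [indicator_of_mem hxk] at hk
      exact mem_biUnion (show k ∈ T from hk) hxk
    · rw [indicator_of_notMem hxk] at hk
      exact absurd hk (by simp)
  have hhalf : ∀ k ∈ T, μ (Q k) ≤ 2 * μ (Q k ∩ S) := by
    intro k hk
    have hk' : t < b k ^ (-s⁻¹) := hk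
    have hbk : b k ≤ t ^ (-s) := by
      have h1 : (b k ^ (-s⁻¹)) ^ (-s) = b k := by
        rw [← ENNReal.rpow_mul]
        rw [neg_mul_neg, inv_mul_cancel₀ hs.ne', ENNReal.rpow_one]
      rw [← h1]
      rw [ENNReal.rpow_neg _ s, ENNReal.rpow_neg _ s]
      exact ENNReal.inv_le_inv.2 (ENNReal.rpow_le_rpow hk'.le hs.le)
    have hts0 : t ^ (-s) ≠ 0 := by
      rw [ENNReal.rpow_neg]
      exact ENNReal.inv_ne_zero.2 (ENNReal.rpow_ne_top_of_nonneg hs.le ht1)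
    have hts1 : t ^ (-s) ≠ ∞ := by
      rw [ENNReal.rpow_neg]
      exact ENNReal.inv_ne_top.2 (by simp [ENNReal.rpow_eq_zero_iff, ht0, ht1])
    have h2 : t ^ (-s) * (2 * μ (Q k \ S)) ≤ t ^ (-s) * μ (Q k) := by
      calc t ^ (-s) * (2 * μ (Q k \ S)) = ∫⁻ x in Q k \ S, (t ^ (-s) * 2) ∂μ := by
            rw [setLIntegral_const, mul_assoc]
        _ ≤ ∫⁻ x in Q k \ S, F x ^ (-s) ∂μ := by
            refine setLIntegral_mono' ((hQm k).diff hSm) fun x hx => ?_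
            have hx2 : 2 ^ (s⁻¹) * F x < t := not_le.1 hx.2
            have h3 : (2 ^ (s⁻¹) * F x) ^ s ≤ t ^ s := ENNReal.rpow_le_rpow hx2.le hs.le
            rw [ENNReal.mul_rpow_of_nonneg _ _ hs.le, ← ENNReal.rpow_mul,
              inv_mul_cancel₀ hs.ne', ENNReal.rpow_one] at h3
            rw [ENNReal.rpow_neg, ENNReal.rpow_neg]
            have h4 := ENNReal.inv_le_inv.2 h3
            rw [ENNReal.mul_inv (by simp) (by simp)] at h4
            calc (t ^ s)⁻¹ * 2 ≤ (2⁻¹ * (F x ^ s)⁻¹) * 2 := by gcongr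
              _ = (2⁻¹ * 2) * (F x ^ s)⁻¹ := by ring
              _ = _ := by rw [ENNReal.inv_mul_cancel (by simp) (by simp), one_mul]
        _ ≤ ∫⁻ x in Q k, F x ^ (-s) ∂μ := lintegral_mono_set sdiff_subset
        _ = b k * μ (Q k) := hb k
        _ ≤ _ := by gcongr
    have h5 : 2 * μ (Q k \ S) ≤ μ (Q k) := (ENNReal.mul_le_mul_iff_right hts0 hts1).1 h2
    have h6 : μ (Q k ∩ S) + μ (Q k \ S) = μ (Q k) := measure_inter_add_sdiff _ hSm
    have h7 : μ (Q k \ S) ≠ ∞ := ne_top_of_le_ne_top (hQ1 k) (measure_mono sdiff_subset)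
    rw [← h6, two_mul] at h5
    have h8 : μ (Q k \ S) ≤ μ (Q k ∩ S) := (ENNReal.add_le_add_iff_right h7).1 h5
    rw [← h6, two_mul]
    gcongr
  calc _ ≤ μ (⋃ k ∈ T, Q k) := measure_mono hsub
    _ ≤ A * ∑ k ∈ u, μ (Q k) := hu
    _ ≤ A * ∑ k ∈ u, 2 * μ (Q k ∩ S) := by
        gcongr with k hk
        exact hhalf k (huT hk)
    _ = 2 * A * μ (⋃ k ∈ u, Q k ∩ S) := by
        rw [← Finset.mul_sum, measure_biUnion_finset (fun i hi j hj hij =>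
          (hud hi hj hij).mono inter_subset_left inter_subset_left)
          (fun k _ => (hQm k).inter hSm)]
        ring
    _ ≤ _ := by
        gcongr
        exact iUnion₂_subset fun k _ => inter_subset_right

open scoped ENNReal in
lemma main_aux {α : Type*} [MeasurableSpace α] (μ : Measure α) {ι : Type*} [Fintype ι]
    (Q : ι → Set α) (hQm : ∀ k, MeasurableSet (Q k))
    (hQ0 : ∀ k, μ (Q k) ≠ 0) (hQ1 : ∀ k, μ (Q k) ≠ ∞) (A : ℝ≥0∞) (hA0 : A ≠ 0) (hA : A ≠ ∞)
    (hcov : ∀ T : Set ι, ∃ u : Finset ι, (u : Set ι) ⊆ T ∧ (u : Set ι).PairwiseDisjoint Q ∧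
      μ (⋃ k ∈ T, Q k) ≤ A * ∑ k ∈ u, μ (Q k))
    (g : ι → α → ℝ≥0∞) (hg : ∀ k, AEMeasurable (g k) μ) (hsupp : ∀ k, ∀ x ∉ Q k, g k x = 0)
    (a : ι → ℝ≥0∞) (ha1 : ∀ k, a k ≠ ∞) (ha : ∀ k, ∫⁻ x, g k x ∂μ = a k * μ (Q k))
    (p s : ℝ) (hp : 0 < p) (hs : 0 < s) (hps : p + s = 1) :
    ∫⁻ x, (∑ k, g k x) ^ p ∂μ ≤ (2 * A * (2 ^ s⁻¹) ^ p) ^ s *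
      ∫⁻ x, (∑ k, (Q k).indicator (fun _ => a k) x) ^ p ∂μ := by
  set F : α → ℝ≥0∞ := fun x => ∑ k, (Q k).indicator (fun _ => a k) x with hFdef
  have hF : Measurable F := by
    refine Finset.measurable_sum _ fun k _ => measurable_const.indicator (hQm k)
  have hFt : ∀ x, F x ≠ ∞ := by
    intro x
    refine ENNReal.sum_ne_top.2 fun k _ => ?_
    by_cases hx : x ∈ Q k <;> simp [hx, ha1 k]
  by_cases hfin : ∫⁻ x, F x ^ p ∂μ = ∞
  · rw [hfin, ENNReal.mul_top]
    · exact le_top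
    · exact (ENNReal.rpow_pos (pos_iff_ne_zero.2 (const_ne_zero A hA0 p s hp hs)) (const_ne_top A hA p s hp hs)).ne'
  set b : ι → ℝ≥0∞ := fun k => (∫⁻ x in Q k, F x ^ (-s) ∂μ) / μ (Q k) with hbdef
  have hb : ∀ k, ∫⁻ x in Q k, F x ^ (-s) ∂μ = b k * μ (Q k) := fun k =>
    (ENNReal.div_mul_cancel (hQ0 k) (hQ1 k)).symm
  set H : α → ℝ≥0∞ := fun x => ⨆ k, (Q k).indicator (fun _ => b k ^ (-s⁻¹)) x with hHdef
  have hH : Measurable H := .iSup fun k => measurable_const.indicator (hQm k)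
  have hb0 : ∀ k, b k ≠ 0 := by
    intro k h0
    have h1 : ∫⁻ x in Q k, F x ^ (-s) ∂μ = 0 := by rw [hb, h0, zero_mul]
    rw [lintegral_eq_zero_iff (hF.pow_const _)] at h1
    have h2 : ∀ᵐ x ∂(μ.restrict (Q k)), False := by
      filter_upwards [h1] with x hx
      simp only [Pi.zero_apply, ENNReal.rpow_neg, ENNReal.inv_eq_zero] at hx
      exact ENNReal.rpow_ne_top_of_nonneg hs.le (hFt x) hx
    rw [Filter.eventually_false_iff_eq_bot, ae_eq_bot, Measure.restrict_eq_zero] at h2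
    exact hQ0 k h2
  have hHt : ∀ x, H x ≠ ∞ := by
    intro x
    have : H x ≤ ∑ k, b k ^ (-s⁻¹) := by
      refine iSup_le fun k => ?_
      refine (indicator_le_self' (by simp) x).trans ?_
      exact Finset.single_le_sum (f := fun k => b k ^ (-s⁻¹)) (fun _ _ => zero_le) (Finset.mem_univ k)
    refine ne_top_of_le_ne_top (ENNReal.sum_ne_top.2 fun k _ => ?_) this
    rw [ENNReal.rpow_neg]
    refine ENNReal.inv_ne_top.2 fun h => ?_
    rw [ENNReal.rpow_eq_zero_iff] at h
    rcases h with h | h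
    · exact hb0 k h.1
    · linarith [inv_pos.2 hs, h.2]
  have hHp : ∫⁻ x, H x ^ p ∂μ ≤ (2 * A * (2 ^ s⁻¹) ^ p) * ∫⁻ x, F x ^ p ∂μ := by
    have h2 : (2 : ℝ≥0∞) ^ s⁻¹ ≠ ∞ := ENNReal.rpow_ne_top_of_nonneg (by positivity) (by simp)
    have := layer_aux μ H (fun x => 2 ^ s⁻¹ * F x) hH (hF.const_mul _) hHt
      (fun x => ENNReal.mul_ne_top h2 (hFt x)) (2 * A) (ENNReal.mul_ne_top (by simp) hA) p hp
      (fun t ht => weak_aux μ Q hQm hQ1 A hcov F hF s hs b hb (ENNReal.ofReal t)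
        (by simpa using ht) (by simp))
    refine this.trans_eq ?_
    simp_rw [ENNReal.mul_rpow_of_nonneg _ _ hp.le]
    rw [lintegral_const_mul' _ _ (ENNReal.rpow_ne_top_of_nonneg hp.le h2)]
    ring
  set G : α → ℝ≥0∞ := fun x => ∑ k, g k x with hGdef
  have hG : AEMeasurable G μ := Finset.aemeasurable_fun_sum _ fun k _ => hg k
  have hHs : AEMeasurable (fun x => H x ^ (-s)) μ := (hH.pow_const _).aemeasurable
  have hGH : ∫⁻ x, G x * H x ^ (-s) ∂μ ≤ ∫⁻ x, F x ^ p ∂μ := by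
    calc ∫⁻ x, G x * H x ^ (-s) ∂μ = ∑ k, ∫⁻ x, g k x * H x ^ (-s) ∂μ := by
          rw [← lintegral_finsetSum' (f := fun k x => g k x * H x ^ (-s)) _
            fun k _ => (hg k).mul hHs]
          simp_rw [hGdef, Finset.sum_mul]
      _ ≤ ∑ k, ∫⁻ x, g k x * b k ∂μ := by
          refine Finset.sum_le_sum fun k _ => lintegral_mono fun x => ?_
          by_cases hx : x ∈ Q k
          · have h1 : b k ^ (-s⁻¹) ≤ H x := by
              refine le_trans ?_ (le_iSup _ k)
              rw [indicator_of_mem hx]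
            have h2 : (b k ^ (-s⁻¹)) ^ (-s) = b k := by
              rw [← ENNReal.rpow_mul]
              rw [neg_mul_neg, inv_mul_cancel₀ hs.ne', ENNReal.rpow_one]
            refine mul_le_mul_right ?_ _
            rw [← h2, ENNReal.rpow_neg _ s, ENNReal.rpow_neg _ s]
            exact ENNReal.inv_le_inv.2 (ENNReal.rpow_le_rpow h1 hs.le)
          · simp [hsupp k x hx]
      _ = ∑ k, ∫⁻ x, (Q k).indicator (fun _ => a k) x * F x ^ (-s) ∂μ := by
          refine Finset.sum_congr rfl fun k _ => ?_
          rw [lintegral_mul_const'' _ (hg k), ha, mul_assoc, mul_comm (μ (Q k)), ← hb,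
            ← lintegral_const_mul' _ _ (ha1 k), ← lintegral_indicator (hQm k)]
          refine lintegral_congr fun x => ?_
          by_cases hx : x ∈ Q k <;> simp [hx]
      _ = ∫⁻ x, F x * F x ^ (-s) ∂μ := by
          rw [← lintegral_finsetSum
            (f := fun k x => (Q k).indicator (fun _ => a k) x * F x ^ (-s)) _ fun k _ =>
            (measurable_const.indicator (hQm k)).mul (hF.pow_const _)]
          simp_rw [hFdef, Finset.sum_mul]
      _ ≤ _ := by
          refine lintegral_mono fun x => ?_
          by_cases h0 : F x = 0
          · simp [h0]
          · have : p = 1 + (-s) := by linarith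
            rw [this, ENNReal.rpow_add _ _ h0 (hFt x), ENNReal.rpow_one]
  have hae : ∀ᵐ x ∂μ, G x * H x ^ (-s) < ∞ :=
    ae_lt_top' (hG.mul hHs) (ne_top_of_le_ne_top hfin hGH)
  calc ∫⁻ x, G x ^ p ∂μ ≤ ∫⁻ x, (G x * H x ^ (-s)) ^ p * (H x ^ p) ^ s ∂μ := by
        refine lintegral_mono_ae ?_
        filter_upwards [hae] with x hx
        by_cases hG0 : G x = 0
        · simp [hG0, hp]
        have hH0 : H x ≠ 0 := by
          intro h0
          rw [h0, ENNReal.zero_rpow_of_neg (by linarith), ENNReal.mul_top hG0] at hx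
          exact lt_irrefl _ hx
        rw [ENNReal.mul_rpow_of_nonneg _ _ hp.le, ← ENNReal.rpow_mul, ← ENNReal.rpow_mul, mul_assoc,
          ← ENNReal.rpow_add _ _ hH0 (hHt x), show -s * p + p * s = 0 by ring, ENNReal.rpow_zero,
          mul_one]
    _ ≤ (∫⁻ x, G x * H x ^ (-s) ∂μ) ^ p * (∫⁻ x, H x ^ p ∂μ) ^ s :=
        ENNReal.lintegral_mul_norm_pow_le (hG.mul hHs) (hH.pow_const _).aemeasurable hp.le hs.le hps
    _ ≤ (∫⁻ x, F x ^ p ∂μ) ^ p * ((2 * A * (2 ^ s⁻¹) ^ p) * ∫⁻ x, F x ^ p ∂μ) ^ s := by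
        gcongr
    _ = _ := by
        rw [ENNReal.mul_rpow_of_nonneg _ _ hs.le, mul_left_comm,
          ← ENNReal.rpow_add_of_nonneg _ _ hp.le hs.le, hps, ENNReal.rpow_one]

lemma cube_eq {n : ℕ} (c : EuclideanSpace ℝ (Fin n)) (l : ℝ) :
    Cube c l = (@WithLp.ofLp 2 (Fin n → ℝ)) ⁻¹'
      (Icc (fun i => c i - l / 2) (fun i => c i + l / 2)) := by
  ext x
  simp only [Cube, mem_setOf_eq, mem_preimage, mem_Icc, Pi.le_def]
  exact forall_and

lemma cube_meas {n : ℕ} (c : EuclideanSpace ℝ (Fin n)) (l : ℝ) : MeasurableSet (Cube c l) := by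
  rw [cube_eq]
  exact (PiLp.volume_preserving_ofLp (Fin n)).measurable measurableSet_Icc

lemma cube_vol {n : ℕ} (c : EuclideanSpace ℝ (Fin n)) (l : ℝ) :
    volume (Cube c l) = ENNReal.ofReal l ^ n := by
  rw [cube_eq, (PiLp.volume_preserving_ofLp (Fin n)).measure_preimage
    measurableSet_Icc.nullMeasurableSet, Real.volume_Icc_pi]
  simp

lemma cube_mono {n : ℕ} (c : EuclideanSpace ℝ (Fin n)) {l m : ℝ} (h : l ≤ m) :
    Cube c l ⊆ Cube c m := by
  intro x hx i
  have := hx i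
  constructor <;> linarith [this.1, this.2]

open scoped ENNReal in
lemma cube_cov {n K : ℕ} (c : Fin K → EuclideanSpace ℝ (Fin n)) (l : Fin K → ℝ)
    (hl : ∀ k, 0 < l k) (T : Set (Fin K)) :
    ∃ u : Finset (Fin K), (u : Set (Fin K)) ⊆ T ∧
      (u : Set (Fin K)).PairwiseDisjoint (fun k => Cube (c k) (l k)) ∧
      volume (⋃ k ∈ T, Cube (c k) (l k)) ≤ 5 ^ n * ∑ k ∈ u, volume (Cube (c k) (l k)) := by
  classical
  obtain ⟨u, huT, hud, hu⟩ := Vitali.exists_disjoint_subfamily_covering_enlargement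
    (fun k => Cube (c k) (l k)) T l 2 (by norm_num) (fun k _ => (hl k).le) (∑ k, l k)
    (fun k _ => Finset.single_le_sum (fun i _ => (hl i).le) (Finset.mem_univ k))
    (fun k _ => ⟨c k, fun i => ⟨by linarith [hl k], by linarith [hl k]⟩⟩)
  refine ⟨u.toFinset, by simpa using huT, by simpa using hud, ?_⟩
  have hsub : (⋃ k ∈ T, Cube (c k) (l k)) ⊆ ⋃ k ∈ u.toFinset, Cube (c k) (5 * l k) := by
    refine iUnion₂_subset fun k hk x hx => ?_
    obtain ⟨j, hj, ⟨y, hyk, hyj⟩, hkj⟩ := hu k hk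
    refine mem_biUnion (by simpa using hj) fun i => ?_
    have h1 := hx i
    have h2 := hyk i
    have h3 := hyj i
    constructor <;> linarith [h1.1, h1.2, h2.1, h2.2, h3.1, h3.2]
  refine (measure_mono hsub).trans ((measure_biUnion_finset_le _ _).trans ?_)
  rw [Finset.mul_sum]
  refine Finset.sum_le_sum fun k _ => ?_
  rw [cube_vol, cube_vol, ENNReal.ofReal_mul (by norm_num), mul_pow]
  simp

open scoped ENNReal in
lemma cube_main (n : ℕ) (p : ℝ) (hp0 : 0 < p) (hp1 : p ≤ 1) :
    ∃ B : ℝ≥0∞, B ≠ 0 ∧ B ≠ ∞ ∧ ∀ (K : ℕ) (c : Fin K → EuclideanSpace ℝ (Fin n)) (l : Fin K → ℝ)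
      (g : Fin K → EuclideanSpace ℝ (Fin n) → ℝ≥0∞) (a : Fin K → ℝ≥0∞),
      (∀ k, 0 < l k) → (∀ k, AEMeasurable (g k) volume) →
      (∀ k, ∀ x ∉ Cube (c k) (l k), g k x = 0) → (∀ k, a k ≠ ∞) →
      (∀ k, ∫⁻ x, g k x = a k * volume (Cube (c k) (l k))) →
      ∫⁻ x, (∑ k, g k x) ^ p ≤
        B * ∫⁻ x, (∑ k, (Cube (c k) (l k)).indicator (fun _ => a k) x) ^ p := by
  rcases hp1.eq_or_lt with rfl | hp1
  · refine ⟨1, by simp, by simp, fun K c l g a hl hg hsupp ha1 ha => ?_⟩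
    simp only [ENNReal.rpow_one, one_mul]
    rw [lintegral_finsetSum' _ fun k _ => hg k,
      lintegral_finsetSum _ fun k _ => measurable_const.indicator (cube_meas _ _)]
    refine Finset.sum_le_sum fun k _ => ?_
    rw [ha, lintegral_indicator (cube_meas _ _), setLIntegral_const]
  · have hs : 0 < 1 - p := by linarith
    have h50 : (5 : ℝ≥0∞) ^ n ≠ 0 := by simp
    have h5t : (5 : ℝ≥0∞) ^ n ≠ ∞ := ENNReal.pow_ne_top (by simp)
    refine ⟨(2 * 5 ^ n * (2 ^ (1 - p)⁻¹) ^ p) ^ (1 - p), ?_, ?_, ?_⟩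
    · exact (ENNReal.rpow_pos (pos_iff_ne_zero.2 (const_ne_zero _ h50 p _ hp0 hs))
        (const_ne_top _ h5t p _ hp0 hs)).ne'
    · exact ENNReal.rpow_ne_top_of_nonneg hs.le (const_ne_top _ h5t p _ hp0 hs)
    · intro K c l g a hl hg hsupp ha1 ha
      have hv : ∀ k, volume (Cube (c k) (l k)) ≠ 0 := fun k => by
        rw [cube_vol]
        exact pow_ne_zero _ (by simpa using hl k)
      have hv' : ∀ k, volume (Cube (c k) (l k)) ≠ ∞ := fun k => by
        rw [cube_vol]
        exact ENNReal.pow_ne_top (by simp)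
      exact main_aux volume (fun k => Cube (c k) (l k)) (fun k => cube_meas _ _) hv hv' (5 ^ n)
        h50 h5t (cube_cov c l hl) g hg hsupp a ha1 ha p (1 - p) hp0 hs (by ring)

/-- Lemma 1 of Grafakos–Kalton: for a finite collection of cubes `Q_k` and
nonnegative integrable functions `g_k` supported in `Q_k`,
`‖∑ g_k‖_{L^p} ≤ C ‖∑ (|Q_k|⁻¹ ∫_{Q_k} g_k) χ_{Q_k^*}‖_{L^p}`, where `Q_k^*` is the
cube with the same center as `Q_k` and `2√n` times its side length. -/
theorem stmt1 (n : ℕ) (hn : 1 ≤ n) (p : ℝ) (hp0 : 0 < p) (hp1 : p ≤ 1) :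
    ∃ C : ℝ, 0 < C ∧ ∀ (K : ℕ) (c : Fin K → EuclideanSpace ℝ (Fin n)) (l : Fin K → ℝ)
      (g : Fin K → EuclideanSpace ℝ (Fin n) → ℝ),
      (∀ k, 0 < l k) →
      (∀ k, ∀ x, 0 ≤ g k x) →
      (∀ k, Integrable (g k)) →
      (∀ k, Function.support (g k) ⊆ Cube (c k) (l k)) →
      eLpNorm (fun x => ∑ k, g k x) (ENNReal.ofReal p) volume ≤
        ENNReal.ofReal C *
          eLpNorm (fun x => ∑ k,
            ((volume (Cube (c k) (l k))).toReal⁻¹ * ∫ y in Cube (c k) (l k), g k y) *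
              (Cube (c k) (2 * Real.sqrt n * l k)).indicator 1 x)
            (ENNReal.ofReal p) volume := by
  obtain ⟨B, hB0, hBt, hB⟩ := cube_main n p hp0 hp1
  have hip : 0 < 1 / p := by positivity
  have hBt' : B ^ (1 / p) ≠ ⊤ := ENNReal.rpow_ne_top_of_nonneg hip.le hBt
  refine ⟨(B ^ (1 / p)).toReal, ENNReal.toReal_pos
    (ENNReal.rpow_pos (pos_iff_ne_zero.2 hB0) hBt).ne' hBt', ?_⟩
  intro K c l g hl hg0 hgi hsupp
  rw [ENNReal.ofReal_toReal hBt']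
  have hpz : ENNReal.ofReal p ≠ 0 := by simpa using hp0
  rw [eLpNorm_eq_lintegral_rpow_enorm_toReal hpz (by simp),
    eLpNorm_eq_lintegral_rpow_enorm_toReal hpz (by simp), ENNReal.toReal_ofReal hp0.le,
    ← ENNReal.mul_rpow_of_nonneg _ _ hip.le]
  refine ENNReal.rpow_le_rpow ?_ hip.le
  set a : Fin K → ℝ := fun k =>
    (volume (Cube (c k) (l k))).toReal⁻¹ * ∫ y in Cube (c k) (l k), g k y with ha
  have hz : ∀ k, ∀ x ∉ Cube (c k) (l k), g k x = 0 := fun k x hx => by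
    by_contra h
    exact hx (hsupp k h)
  have ha0 : ∀ k, 0 ≤ a k := fun k =>
    mul_nonneg (by positivity) (integral_nonneg fun x => hg0 k x)
  have hv : ∀ k, volume (Cube (c k) (l k)) ≠ 0 := fun k => by
    rw [cube_vol]
    exact pow_ne_zero _ (by simpa using hl k)
  have hv' : ∀ k, volume (Cube (c k) (l k)) ≠ ⊤ := fun k => by
    rw [cube_vol]
    exact ENNReal.pow_ne_top (by simp)
  have key := hB K c l (fun k x => ENNReal.ofReal (g k x)) (fun k => ENNReal.ofReal (a k)) hl
    (fun k => (hgi k).aemeasurable.ennreal_ofReal) (fun k x hx => by simp [hz k x hx])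
    (fun k => by simp) (fun k => by
      rw [← ofReal_integral_eq_lintegral_ofReal (hgi k) (Filter.Eventually.of_forall (hg0 k)),
        ← setIntegral_eq_integral_of_forall_compl_eq_zero (hz k)]
      conv_rhs => rw [← ENNReal.ofReal_toReal (hv' k)]
      rw [← ENNReal.ofReal_mul (ha0 k)]
      congr 1
      have := (ENNReal.toReal_pos (hv k) (hv' k)).ne'
      simp only [ha]
      field_simp)
  calc _ = ∫⁻ x, (∑ k, ENNReal.ofReal (g k x)) ^ p := by
        refine lintegral_congr fun x => ?_
        rw [Real.enorm_of_nonneg (Finset.sum_nonneg fun k _ => hg0 k x),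
          ENNReal.ofReal_sum_of_nonneg fun k _ => hg0 k x]
    _ ≤ _ := key
    _ ≤ _ := by
        refine mul_le_mul_right (lintegral_mono fun x => ?_) _
        refine ENNReal.rpow_le_rpow ?_ hp0.le
        have hnn : ∀ k, 0 ≤ a k * (Cube (c k) (2 * Real.sqrt n * l k)).indicator 1 x := fun k =>
          mul_nonneg (ha0 k) (indicator_nonneg (fun _ _ => zero_le_one) x)
        rw [Real.enorm_of_nonneg (Finset.sum_nonneg fun k _ => hnn k),
          ENNReal.ofReal_sum_of_nonneg fun k _ => hnn k]
        refine Finset.sum_le_sum fun k _ => ?_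
        by_cases hx : x ∈ Cube (c k) (l k)
        · have h1 : (1 : ℝ) ≤ Real.sqrt n := by
            rw [Real.one_le_sqrt]
            exact_mod_cast hn
          have hx' : x ∈ Cube (c k) (2 * Real.sqrt n * l k) :=
            cube_mono _ (by nlinarith [hl k]) hx
          simp [hx, hx']
        · simp [hx]

end
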